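/- Let n ≥ 2 be an integer and a ∈ ℝ. There exists a function f : ℝ → ℝ which is continuously differentiable on [0, +∞) and twice differentiable at every s > 0, with f(0) = a and f'(0) = 0, such that f'(s) ∈ (−1, 1) for every s ≥ 0, and f''(s) = (1 − f'(s)²)·(1 − (n−1)·f'(s)/s) for every s > 0. -/

import Mathlib

/-!
Substituting `f' = tanh v` removes the barriers `f' = ±1` and turns the equation, with `m = n - 1`,
into `v' = 1 - m * tanh v / s`. Rescaling `v = s * w` absorbs the singularity at `s = 0`: adding
`p * w` with `p = max m 0` to both sides gives `s * w' + (p + 1) * w = H s w`, where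
`H s w = 1 + (p * (s * w) - m * tanh (s * w)) / s` extends continuously to `s = 0` and is
`|m|`-Lipschitz in `w`. The bounded solutions are the fixed points of `w ↦ A (fun t ↦ H t (w t))`,
where `A g s = ∫ r in 0..1, r ^ p * g (s * r)` has norm `1 / (p + 1)` on bounded functions. Since
`|m| < p + 1` exactly when `-1 < m`, this is a contraction, on the whole line at once.
-/

open Set Filter Topology
open scoped NNReal BoundedContinuousFunction

section HardyAverage

variable {E : Type*} [NormedAddCommGroup E] [NormedSpace ℝ E] {p : ℝ} {g h : ℝ → E}

/-- The weighted Hardy average, `s ^ (-p - 1) • ∫ t in 0..s, t ^ p • g t` for `0 < s`. It is written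
as an integral over the unit interval so that it needs no separate value at `s = 0`. -/
noncomputable def hardyAverage (p : ℝ) (g : ℝ → E) (s : ℝ) : E :=
  ∫ r in (0 : ℝ)..1, r ^ p • g (s * r)

lemma continuous_hardyAverage (hp : 0 ≤ p) (hg : Continuous g) : Continuous (hardyAverage p g) := by
  have hpow : Continuous fun x : ℝ => x ^ p := Real.continuous_rpow_const hp
  refine intervalIntegral.continuous_parametric_intervalIntegral_of_continuous'
    (f := fun s r => r ^ p • g (s * r)) ?_ 0 1
  exact (hpow.comp continuous_snd).smul (hg.comp (continuous_fst.mul continuous_snd))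

lemma norm_hardyAverage_le (hp : -1 < p) {C : ℝ} (hC : ∀ t, ‖g t‖ ≤ C) (s : ℝ) :
    ‖hardyAverage p g s‖ ≤ C / (p + 1) := by
  have hpow_int : IntervalIntegrable (fun r : ℝ => r ^ p * C) MeasureTheory.volume 0 1 :=
    (intervalIntegral.intervalIntegrable_rpow' hp).mul_const C
  calc ‖hardyAverage p g s‖ ≤ ∫ r in (0 : ℝ)..1, r ^ p * C := by
        refine intervalIntegral.norm_integral_le_of_norm_le zero_le_one
          (Eventually.of_forall fun r hr => ?_) hpow_int
        have hr0 : 0 ≤ r ^ p := Real.rpow_nonneg hr.1.le p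
        rw [norm_smul, Real.norm_of_nonneg hr0]
        exact mul_le_mul_of_nonneg_left (hC _) hr0
    _ = C / (p + 1) := by
        rw [intervalIntegral.integral_mul_const, integral_rpow (Or.inl hp), Real.one_rpow,
          Real.zero_rpow (by linarith), sub_zero, one_div_mul_eq_div]

lemma hardyAverage_sub (hp : 0 ≤ p) (hg : Continuous g) (hh : Continuous h) :
    hardyAverage p (g - h) = hardyAverage p g - hardyAverage p h := by
  have hint {k : ℝ → E} (hk : Continuous k) (s : ℝ) :
      IntervalIntegrable (fun r : ℝ => r ^ p • k (s * r)) MeasureTheory.volume 0 1 :=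
    ((Real.continuous_rpow_const hp).smul (hk.comp (continuous_const_mul s))).intervalIntegrable _ _
  funext s
  simp only [hardyAverage, Pi.sub_apply, smul_sub]
  exact intervalIntegral.integral_sub (hint hg s) (hint hh s)

lemma rpow_smul_hardyAverage {s : ℝ} (hs : 0 < s) :
    s ^ (p + 1) • hardyAverage p g s = ∫ t in (0 : ℝ)..s, t ^ p • g t := by
  calc s ^ (p + 1) • hardyAverage p g s
      = s • ∫ r in (0 : ℝ)..1, s ^ p • r ^ p • g (s * r) := by
        rw [Real.rpow_add_one hs.ne', mul_comm, mul_smul, intervalIntegral.integral_smul,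
          hardyAverage]
    _ = s • ∫ r in (0 : ℝ)..1, (s * r) ^ p • g (s * r) := by
        congr 1
        refine intervalIntegral.integral_congr fun r hr => ?_
        rw [uIcc_of_le zero_le_one] at hr
        simp only [Real.mul_rpow hs.le hr.1, mul_smul]
    _ = ∫ t in (0 : ℝ)..s, t ^ p • g t := by
        simpa only [mul_zero, mul_one] using
          intervalIntegral.smul_integral_comp_mul_left (a := 0) (b := 1) (fun t => t ^ p • g t) s

lemma hasDerivAt_smul_hardyAverage [CompleteSpace E] (hp : 0 ≤ p) (hg : Continuous g) {s : ℝ}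
    (hs : 0 < s) :
    HasDerivAt (fun u => u • hardyAverage p g u) (g s - p • hardyAverage p g s) s := by
  have hcont : Continuous fun t : ℝ => t ^ p • g t := (Real.continuous_rpow_const hp).smul hg
  have hderiv := (Real.hasDerivAt_rpow_const (p := -p) (Or.inl hs.ne')).smul
    (hcont.integral_hasStrictDerivAt 0 s).hasDerivAt
  have heq : (fun u => u • hardyAverage p g u) =ᶠ[𝓝 s]
      fun u => u ^ (-p) • ∫ t in (0 : ℝ)..u, t ^ p • g t := by
    filter_upwards [lt_mem_nhds hs] with u hu
    rw [← rpow_smul_hardyAverage hu, smul_smul, ← Real.rpow_add hu, neg_add_cancel_left,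
      Real.rpow_one]
  refine (hderiv.congr_of_eventuallyEq heq).congr_deriv ?_
  rw [← rpow_smul_hardyAverage hs, smul_smul, smul_smul, mul_assoc, ← Real.rpow_add hs,
    ← Real.rpow_add hs, show -p - 1 + (p + 1) = 0 by ring, neg_add_cancel, Real.rpow_zero, mul_one,
    one_smul, neg_smul, ← sub_eq_add_neg]

end HardyAverage

section SingularODE

variable {E : Type*} [NormedAddCommGroup E] [NormedSpace ℝ E] [CompleteSpace E]
  {p C : ℝ} {K : ℝ≥0} {H : ℝ → E → E}

lemma exists_hardyAverage_eq_self (hp : 0 ≤ p) (hH : Continuous (Function.uncurry H))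
    (hLip : ∀ t, LipschitzWith K (H t)) (hK : K < p + 1) (hC : ∀ t, ‖H t 0‖ ≤ C) :
    ∃ w : ℝ → E, Continuous w ∧ hardyAverage p (fun t => H t (w t)) = w := by
  lift p to ℝ≥0 using hp
  have hp' : (-1 : ℝ) < p := by linarith [p.coe_nonneg]
  have hcomp (w : ℝ →ᵇ E) : Continuous fun t => H t (w t) :=
    hH.comp (continuous_id.prodMk w.continuous)
  have hbound (w : ℝ →ᵇ E) (t : ℝ) : ‖H t (w t)‖ ≤ C + K * ‖w‖ := by
    calc ‖H t (w t)‖ ≤ ‖H t 0‖ + ‖H t (w t) - H t 0‖ := norm_le_norm_add_norm_sub' _ _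
      _ ≤ C + K * ‖w t - 0‖ := add_le_add (hC t) ((hLip t).norm_sub_le _ _)
      _ ≤ C + K * ‖w‖ := by rw [sub_zero]; gcongr; exact w.norm_coe_le_norm t
  let T (w : ℝ →ᵇ E) : ℝ →ᵇ E :=
    BoundedContinuousFunction.ofNormedAddCommGroup (hardyAverage p fun t => H t (w t))
      (continuous_hardyAverage p.coe_nonneg (hcomp w)) _ (norm_hardyAverage_le hp' (hbound w))
  have hT : ContractingWith (K / (p + 1)) T := by
    refine ⟨(div_lt_one (by positivity)).2 (mod_cast hK),
      LipschitzWith.of_dist_le_mul fun v w => ?_⟩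
    refine (BoundedContinuousFunction.dist_le (by positivity)).2 fun s => ?_
    have hdiff (t : ℝ) : ‖H t (v t) - H t (w t)‖ ≤ K * dist v w := by
      rw [← dist_eq_norm]
      exact (hLip t).dist_le_mul_of_le (v.dist_coe_le_dist t)
    calc dist (T v s) (T w s)
        = ‖hardyAverage p ((fun t => H t (v t)) - fun t => H t (w t)) s‖ := by
          rw [hardyAverage_sub p.coe_nonneg (hcomp v) (hcomp w), dist_eq_norm]; rfl
      _ ≤ K * dist v w / (p + 1) := norm_hardyAverage_le hp' hdiff s
      _ = (K / (p + 1) : ℝ≥0) * dist v w := by push_cast; ring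
  exact ⟨hT.fixedPoint, hT.fixedPoint.continuous,
    congr_arg DFunLike.coe hT.fixedPoint_isFixedPt⟩

lemma exists_hasDerivAt_smul_eq_sub (hp : 0 ≤ p) (hH : Continuous (Function.uncurry H))
    (hLip : ∀ t, LipschitzWith K (H t)) (hK : K < p + 1) (hC : ∀ t, ‖H t 0‖ ≤ C) :
    ∃ w : ℝ → E, Continuous w ∧
      ∀ s, 0 < s → HasDerivAt (fun u => u • w u) (H s (w s) - p • w s) s := by
  obtain ⟨w, hw, hfix⟩ := exists_hardyAverage_eq_self hp hH hLip hK hC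
  have hHw : Continuous fun t => H t (w t) := hH.comp (continuous_id.prodMk hw)
  exact ⟨w, hw, fun s hs => by
    simpa only [hfix] using hasDerivAt_smul_hardyAverage hp hHw hs⟩

end SingularODE

section Dslope

variable {𝕜 E : Type*} [NontriviallyNormedField 𝕜] [NormedAddCommGroup E] [NormedSpace 𝕜 E]
  {f : 𝕜 → E}

lemma continuous_dslope {a : 𝕜} (hf : Continuous f) (hfa : DifferentiableAt 𝕜 f a) :
    Continuous (dslope f a) :=
  continuousOn_univ.1 ((continuousOn_dslope univ_mem).2 ⟨hf.continuousOn, hfa⟩)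

-- For `t ≠ 0` the function is `v ↦ t⁻¹ • (f (t * v) - f 0)`, in which the scalings by `t` cancel.
lemma lipschitzWith_smul_dslope_mul {K : ℝ≥0} (hf : LipschitzWith K f) (t : 𝕜) :
    LipschitzWith K fun v => v • dslope f 0 (t * v) := by
  refine LipschitzWith.of_dist_le_mul fun v w => ?_
  rw [dist_eq_norm, dist_eq_norm]
  rcases eq_or_ne t 0 with rfl | ht
  · simp only [zero_mul, dslope_same, ← sub_smul, norm_smul]
    rw [mul_comm]
    gcongr
    exact norm_deriv_le_of_lipschitz hf
  · have hscale (v : 𝕜) : t • v • dslope f 0 (t * v) = f (t * v) - f 0 := by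
      simpa only [sub_zero, mul_smul] using sub_smul_dslope f 0 (t * v)
    refine le_of_mul_le_mul_left ?_ (norm_pos_iff.2 ht)
    calc ‖t‖ * ‖v • dslope f 0 (t * v) - w • dslope f 0 (t * w)‖
        = ‖f (t * v) - f (t * w)‖ := by
          rw [← norm_smul, smul_sub, hscale, hscale, sub_sub_sub_cancel_right]
      _ ≤ K * ‖t * v - t * w‖ := hf.norm_sub_le _ _
      _ = ‖t‖ * (K * ‖v - w‖) := by rw [← mul_sub, norm_mul, mul_left_comm]

end Dslope

lemma exists_hasDerivAt_eq_add_div {p : ℝ} {K : ℝ≥0} {g : ℝ → ℝ} (hp : 0 ≤ p) (hK : K < p + 1)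
    (hLip : LipschitzWith K fun x => p * x + g x) (hg : DifferentiableAt ℝ g 0) (hg0 : g 0 = 0)
    (c : ℝ) :
    ∃ v : ℝ → ℝ, Continuous v ∧ v 0 = 0 ∧ ∀ s, 0 < s → HasDerivAt v (c + g (v s) / s) s := by
  set h : ℝ → ℝ := fun x => p * x + g x
  have hslope : Continuous (dslope h 0) := continuous_dslope hLip.continuous (by fun_prop)
  have hslope_mul (x : ℝ) : x * dslope h 0 x = h x := by
    simpa [h, hg0] using sub_smul_dslope h 0 x
  have hLip_scaled (t : ℝ) : LipschitzWith K fun w => c + w • dslope h 0 (t * w) := by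
    simpa only [zero_add] using
      (LipschitzWith.const c).add (lipschitzWith_smul_dslope_mul hLip t)
  obtain ⟨w, hw, hderiv⟩ := exists_hasDerivAt_smul_eq_sub (C := |c|)
    (H := fun t w => c + w • dslope h 0 (t * w)) hp (by fun_prop) hLip_scaled hK (by simp)
  refine ⟨fun s => s * w s, by fun_prop, zero_mul _, fun s hs => (hderiv s hs).congr_deriv ?_⟩
  have hg_div : g (s * w s) / s = w s * dslope h 0 (s * w s) - p * w s := by
    rw [div_eq_iff hs.ne']
    linear_combination -hslope_mul (s * w s)
  rw [hg_div, smul_eq_mul, smul_eq_mul, add_sub_assoc]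

section Tanh

lemma hasDerivAt_tanh (x : ℝ) : HasDerivAt Real.tanh (1 - Real.tanh x ^ 2) x := by
  have hcosh : Real.cosh x ≠ 0 := (Real.cosh_pos x).ne'
  rw [show Real.tanh = fun y => Real.sinh y / Real.cosh y from
    funext Real.tanh_eq_sinh_div_cosh]
  refine ((Real.hasDerivAt_sinh x).div (Real.hasDerivAt_cosh x) hcosh).congr_deriv ?_
  field_simp

lemma lipschitzWith_max_mul_sub_mul_tanh (m : ℝ) :
    LipschitzWith ‖m‖₊ fun x => max m 0 * x + -m * Real.tanh x := by
  have hderiv (x : ℝ) : HasDerivAt (fun x => max m 0 * x + -m * Real.tanh x)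
      (max m 0 * 1 + -m * (1 - Real.tanh x ^ 2)) x :=
    ((hasDerivAt_id x).const_mul _).add ((hasDerivAt_tanh x).const_mul _)
  refine lipschitzWith_of_nnnorm_deriv_le (fun x => (hderiv x).differentiableAt) fun x => ?_
  rw [(hderiv x).deriv, ← NNReal.coe_le_coe, coe_nnnorm, coe_nnnorm]
  have hsq : Real.tanh x ^ 2 ≤ 1 := (Real.tanh_sq_lt_one x).le
  have hsq0 : 0 ≤ Real.tanh x ^ 2 := sq_nonneg _
  rcases le_total 0 m with hm | hm
  · calc ‖max m 0 * 1 + -m * (1 - Real.tanh x ^ 2)‖ = ‖m * Real.tanh x ^ 2‖ := by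
          rw [max_eq_left hm]; ring_nf
      _ ≤ ‖m‖ := by
          rw [norm_mul, Real.norm_of_nonneg hsq0]
          exact mul_le_of_le_one_right (norm_nonneg m) hsq
  · calc ‖max m 0 * 1 + -m * (1 - Real.tanh x ^ 2)‖ = ‖m‖ * (1 - Real.tanh x ^ 2) := by
          rw [max_eq_right hm, zero_mul, zero_add, norm_mul, norm_neg,
            Real.norm_of_nonneg (sub_nonneg.2 hsq)]
      _ ≤ ‖m‖ := mul_le_of_le_one_right (norm_nonneg m) (by linarith)

lemma exists_hasDerivAt_eq_one_sub_tanh_div {m : ℝ} (hm : -1 < m) :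
    ∃ v : ℝ → ℝ, Continuous v ∧ v 0 = 0 ∧
      ∀ s, 0 < s → HasDerivAt v (1 - m * Real.tanh (v s) / s) s := by
  have hK : ((‖m‖₊ : ℝ≥0) : ℝ) < max m 0 + 1 := by
    rw [coe_nnnorm, Real.norm_eq_abs, abs_lt]
    constructor <;> linarith [le_max_left m 0, le_max_right m 0]
  obtain ⟨v, hv, hv0, hderiv⟩ := exists_hasDerivAt_eq_add_div (le_max_right m 0) hK
    (lipschitzWith_max_mul_sub_mul_tanh m)
    ((hasDerivAt_tanh 0).differentiableAt.const_mul (-m)) (by simp) 1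
  exact ⟨v, hv, hv0, fun s hs => (hderiv s hs).congr_deriv (by ring)⟩

end Tanh

theorem stmt_5_general (d : ℝ) (hd : 0 < d) (a : ℝ) :
    ∃ f : ℝ → ℝ,
      ContDiffOn ℝ 1 f (Set.Ici 0) ∧
      (∀ s : ℝ, 0 < s → DifferentiableAt ℝ (derivWithin f (Set.Ici 0)) s) ∧
      f 0 = a ∧ derivWithin f (Set.Ici 0) 0 = 0 ∧
      (∀ s ∈ Set.Ici (0 : ℝ), derivWithin f (Set.Ici 0) s ∈ Set.Ioo (-1 : ℝ) 1) ∧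
      ∀ s : ℝ, 0 < s →
        deriv (derivWithin f (Set.Ici 0)) s =
          (1 - (derivWithin f (Set.Ici 0) s) ^ 2) *
            (1 - (d - 1) * derivWithin f (Set.Ici 0) s / s) := by
  obtain ⟨v, hv, hv0, hv'⟩ := exists_hasDerivAt_eq_one_sub_tanh_div (m := d - 1) (by linarith)
  set φ : ℝ → ℝ := fun s => Real.tanh (v s)
  have hφ : Continuous φ :=
    (continuous_iff_continuousAt.2 fun x => (hasDerivAt_tanh x).continuousAt).comp hv
  set f : ℝ → ℝ := fun s => a + ∫ t in (0 : ℝ)..s, φ t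
  have hf (s : ℝ) : HasDerivAt f (φ s) s :=
    (hφ.integral_hasStrictDerivAt 0 s).hasDerivAt.const_add a
  have hf' : EqOn (derivWithin f (Ici 0)) φ (Ici 0) := fun s hs =>
    (hf s).hasDerivWithinAt.derivWithin (uniqueDiffOn_Ici 0 s hs)
  have hf'' (s : ℝ) (hs : 0 < s) : HasDerivAt (derivWithin f (Ici 0))
      ((1 - φ s ^ 2) * (1 - (d - 1) * φ s / s)) s :=
    ((hasDerivAt_tanh (v s)).comp s (hv' s hs)).congr_of_eventuallyEq
      (hf'.eventuallyEq_of_mem (Ici_mem_nhds hs))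
  have hfC1 : ContDiff ℝ 1 f := contDiff_one_iff_deriv.2
    ⟨fun s => (hf s).differentiableAt, by rwa [funext fun s => (hf s).deriv]⟩
  refine ⟨f, hfC1.contDiffOn, fun s hs => (hf'' s hs).differentiableAt, by simp [f], ?_, ?_, ?_⟩
  · simp only [hf' self_mem_Ici, φ, hv0, Real.tanh_zero]
  · exact fun s hs => hf' hs ▸ ⟨Real.neg_one_lt_tanh _, Real.tanh_lt_one _⟩
  · exact fun s hs => by rw [(hf'' s hs).deriv, hf' hs.le]

/-- Existence of rotationally symmetric spacelike graphical translating solitons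
in Minkowski space 𝕃^{n+1}. -/
theorem stmt_5 (n : ℕ) (hn : 2 ≤ n) (a : ℝ) :
    ∃ f : ℝ → ℝ,
      ContDiffOn ℝ 1 f (Set.Ici 0) ∧
      (∀ s : ℝ, 0 < s → DifferentiableAt ℝ (derivWithin f (Set.Ici 0)) s) ∧
      f 0 = a ∧ derivWithin f (Set.Ici 0) 0 = 0 ∧
      (∀ s ∈ Set.Ici (0 : ℝ), derivWithin f (Set.Ici 0) s ∈ Set.Ioo (-1 : ℝ) 1) ∧
      ∀ s : ℝ, 0 < s →
        deriv (derivWithin f (Set.Ici 0)) s =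
          (1 - (derivWithin f (Set.Ici 0) s) ^ 2) *
            (1 - ((n : ℝ) - 1) * derivWithin f (Set.Ici 0) s / s) :=
  stmt_5_general n (mod_cast two_pos.trans_le hn) a
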